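/- For n ≥ 1 define the polynomials Y(x) := (1−x²)(1−k²x²), C_n := 2(α+β+n+3/2)·k²·(β_n+β_{n+1}) − 2[(β+n+1/2)k² + (α+n+1/2)] − 4k²·p1(n), M_n(x) := −2(α+β+n+1/2)·k²·x² − C_n, L_n(x) := x·[n·k²·x² − n(1+k²) + 2k²(α+β+n+1/2)·β_n − 2k²·p1(n)], and U_n(x) := −k²·x²·n(n+2α+2β+3) + 2k²(2n+2α+2β+1)·(p1(n)−β_n) + n·k²·(n+2β+1) + n(n+2α+1). Then the monic orthogonal polynomial P_n satisfies, identically in x, the second-order linear differential equation Y(x)·M_n(x)·P_n''(x) − [2x·((α+1)(1−k²x²) + k²(β+1)(1−x²))·M_n(x) + Y(x)·M_n'(x)]·P_n'(x) + [L_n(x)·M_n'(x) + M_n(x)·U_n(x)]·P_n(x) = 0 (this is the equation P_n'' + (X'/(2X) − M_n'/M_n)P_n' + (L_n M_n'/(Y M_n) + U_n/Y)P_n = 0 with X(x) = (1−x²)^{2α+2}(1−k²x²)^{2β+2}, cleared of denominators). -/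

import Mathlib

open MeasureTheory

/-- The quantity `C_n` appearing in the coefficients of the differential equation. -/
noncomputable def Caux (α β k2 : ℝ) (b p1 : ℕ → ℝ) (n : ℕ) : ℝ :=
  2 * (α + β + (n:ℝ) + 3/2) * k2 * (b n + b (n + 1))
    - 2 * ((β + (n:ℝ) + 1/2) * k2 + (α + (n:ℝ) + 1/2))
    - 4 * k2 * p1 n

section SemiclassicalJacobi

open Polynomial

section Weight

variable {α β k : ℝ} {w : ℝ → ℝ}

/-- The polynomial `(1 - x²)(1 - k x²)`. -/
noncomputable def pearsonY (k : ℝ) : ℝ[X] := (1 - X ^ 2) * (1 - C k * X ^ 2)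

/-- The polynomial `q` of the Pearson equation `(Y w)' = q w`. -/
noncomputable def pearsonQ (α β k : ℝ) : ℝ[X] :=
  -(2 * X * (C (α + 1) * (1 - C k * X ^ 2) + C (k * (β + 1)) * (1 - X ^ 2)))

theorem intervalIntegrable_eval_mul (hw : IntervalIntegrable w volume (-1) 1) (p : ℝ[X]) :
    IntervalIntegrable (fun x => p.eval x * w x) volume (-1) 1 :=
  hw.continuousOn_mul p.continuous.continuousOn

/-- Integration by parts against the weight, with vanishing boundary terms. -/
theorem integral_pearson (hα : -1 < α) (hk : k ∈ Set.Ioo (0 : ℝ) 1)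
    (hw : ∀ x : ℝ, w x = (1 - x ^ 2) ^ α * (1 - k * x ^ 2) ^ β)
    (hint : IntervalIntegrable w volume (-1) 1) (p : ℝ[X]) :
    ∫ x in (-1 : ℝ)..1, (pearsonY k * derivative p + pearsonQ α β k * p).eval x * w x = 0 := by
  have hpos : ∀ x ∈ Set.Icc (-1 : ℝ) 1, 0 < 1 - k * x ^ 2 := by
    intro x hx
    have h1 : x ^ 2 ≤ 1 := by nlinarith [hx.1, hx.2]
    nlinarith [hk.1, hk.2, sq_nonneg x]
  have hcont : ContinuousOn
      (fun x : ℝ => (1 - x ^ 2) ^ (α + 1) * (1 - k * x ^ 2) ^ (β + 1) * p.eval x)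
      (Set.Icc (-1) 1) := by
    refine ContinuousOn.mul (ContinuousOn.mul ?_ ?_) p.continuous.continuousOn
    · exact ContinuousOn.rpow_const (by fun_prop) fun x _ => Or.inr (by linarith)
    · exact ContinuousOn.rpow_const (by fun_prop) fun x hx => Or.inl (hpos x hx).ne'
  have hderiv : ∀ x ∈ Set.Ioo (-1 : ℝ) 1, HasDerivAt
      (fun x : ℝ => (1 - x ^ 2) ^ (α + 1) * (1 - k * x ^ 2) ^ (β + 1) * p.eval x)
      ((pearsonY k * derivative p + pearsonQ α β k * p).eval x * w x) x := by
    intro x hx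
    have hA : 0 < 1 - x ^ 2 := by nlinarith [hx.1, hx.2]
    have hB := hpos x (Set.Ioo_subset_Icc_self hx)
    have dA : HasDerivAt (fun x : ℝ => 1 - x ^ 2) (-(2 * x)) x := by
      simpa using (hasDerivAt_pow 2 x).const_sub 1
    have dB : HasDerivAt (fun x : ℝ => 1 - k * x ^ 2) (-(k * (2 * x))) x := by
      simpa using ((hasDerivAt_pow 2 x).const_mul k).const_sub 1
    have hd := ((dA.rpow_const (p := α + 1) (Or.inl hA.ne')).mul
      (dB.rpow_const (p := β + 1) (Or.inl hB.ne'))).mul (p.hasDerivAt x)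
    refine hd.congr_deriv ?_
    simp only [Pi.mul_apply, add_sub_cancel_right, Real.rpow_add_one hA.ne',
      Real.rpow_add_one hB.ne', hw, pearsonY, pearsonQ, eval_add, eval_mul, eval_sub, eval_neg,
      eval_pow, eval_X, eval_C, eval_one, eval_ofNat]
    ring
  rw [intervalIntegral.integral_eq_sub_of_hasDerivAt_of_le (by norm_num) hcont hderiv
    (intervalIntegrable_eval_mul hint _)]
  have h0 : (0 : ℝ) ^ (α + 1) = 0 := Real.zero_rpow (by linarith)
  simp [h0]

/-- The odd first moment of an even weight vanishes. -/
theorem integral_id_mul_even (heven : ∀ x, w (-x) = w x) : ∫ x in (-1 : ℝ)..1, x * w x = 0 := by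
  have h := intervalIntegral.integral_comp_neg (a := -1) (b := 1) fun x => x * w x
  simp only [heven, neg_mul, intervalIntegral.integral_neg, neg_neg] at h
  linarith

/-- The moment functional `p ↦ ∫ p w` of an integrable weight on `[-1, 1]`. -/
noncomputable def momentFunctional (w : ℝ → ℝ) (hint : IntervalIntegrable w volume (-1) 1) :
    ℝ[X] →ₗ[ℝ] ℝ where
  toFun p := ∫ x in (-1 : ℝ)..1, p.eval x * w x
  map_add' p q := by
    simp only [eval_add, add_mul]
    exact intervalIntegral.integral_add (intervalIntegrable_eval_mul hint p)
      (intervalIntegrable_eval_mul hint q)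
  map_smul' c p := by
    simp [mul_assoc]

end Weight

section Orthogonality

variable {l : ℝ[X] →ₗ[ℝ] ℝ} {P : ℕ → ℝ[X]} {h b : ℕ → ℝ}

theorem coeff_self_of_monic (hm : ∀ n, (P n).Monic) (hd : ∀ n, (P n).natDegree = n) (n : ℕ) :
    (P n).coeff n = 1 := by
  have := (hm n).coeff_natDegree
  rwa [hd] at this

theorem coeff_of_natDegree_eq (hd : ∀ n, (P n).natDegree = n) {n i : ℕ} (hi : n < i) :
    (P n).coeff i = 0 :=
  coeff_eq_zero_of_natDegree_lt (by rwa [hd])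

/-- `P n` is orthogonal to every polynomial of degree less than `n`. -/
theorem orthogonal_of_coeff_eq_zero (hm : ∀ n, (P n).Monic) (hd : ∀ n, (P n).natDegree = n)
    (ho : ∀ m n, l (P m * P n) = if m = n then h n else 0) {n : ℕ} (p : ℝ[X])
    (hp : ∀ i, n ≤ i → p.coeff i = 0) : l (P n * p) = 0 := by
  suffices H : ∀ m ≤ n, ∀ p : ℝ[X], (∀ i, m ≤ i → p.coeff i = 0) → l (P n * p) = 0 from
    H n le_rfl p hp
  intro m
  induction m with
  | zero =>
    intro _ p hp
    have : p = 0 := by ext i; simpa using hp i (Nat.zero_le i)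
    simp [this]
  | succ m ih =>
    intro hmn p hp
    have key := ih (by omega) (p - p.coeff m • P m) (by
      intro i hi
      rcases hi.eq_or_lt with rfl | hi
      · simp [coeff_self_of_monic hm hd]
      · simp [coeff_of_natDegree_eq hd hi, hp i hi])
    rw [mul_sub, mul_smul_comm, map_sub, map_smul, ho, if_neg (by omega), smul_zero,
      sub_zero] at key
    exact key

/-- A polynomial of degree less than `n` that annihilates `1, x, …, x^(n-1)` is zero. -/
theorem eq_zero_of_moments (hm : ∀ n, (P n).Monic) (hd : ∀ n, (P n).natDegree = n)
    (ho : ∀ m n, l (P m * P n) = if m = n then h n else 0) (hpos : ∀ n, 0 < h n) {n : ℕ}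
    (R : ℝ[X]) (hR : ∀ i, n ≤ i → R.coeff i = 0) (hmom : ∀ j < n, l (R * X ^ j) = 0) : R = 0 := by
  by_contra hne
  have hlc : R.coeff R.natDegree ≠ 0 := by simpa using hne
  have hdn : R.natDegree < n := by
    by_contra hlt
    exact hlc (hR _ (by omega))
  set d := R.natDegree with hdd
  have h1 := orthogonal_of_coeff_eq_zero hm hd ho (n := d) (R - R.coeff d • P d) (by
    intro i hi
    rcases hi.eq_or_lt with rfl | hi
    · simp [coeff_self_of_monic hm hd]
    · simp [coeff_of_natDegree_eq hd hi, coeff_eq_zero_of_natDegree_lt (hdd ▸ hi)])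
  have h2 : l (P d * R) = 0 := by
    rw [mul_comm, (P d).as_sum_range_C_mul_X_pow, hd, Finset.mul_sum, map_sum]
    refine Finset.sum_eq_zero fun i hi => ?_
    rw [mul_left_comm, ← smul_eq_C_mul, map_smul, hmom i (by
      have := Finset.mem_range.1 hi; omega), smul_zero]
  rw [mul_sub, mul_smul_comm, map_sub, map_smul, ho, if_pos rfl, h2] at h1
  have := mul_ne_zero hlc (hpos d).ne'
  simp only [smul_eq_mul] at h1
  exact this (by linarith)

/-- `P 1 = X` when the first moment vanishes. -/
theorem eq_X_of_first_moment (hm : ∀ n, (P n).Monic) (hd : ∀ n, (P n).natDegree = n)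
    (ho : ∀ m n, l (P m * P n) = if m = n then h n else 0) (hpos : ∀ n, 0 < h n)
    (hX : l X = 0) : P 1 = X := by
  have h0 : P 0 = 1 := (hm 0).natDegree_eq_zero.1 (hd 0)
  have h1 : P 1 = X + C ((P 1).coeff 0) := by
    conv_lhs => rw [(P 1).eq_X_add_C_of_natDegree_le_one (hd 1).le]
    simp [coeff_self_of_monic hm hd]
  have h10 := ho 1 0
  have h00 := ho 0 0
  simp only [h0, mul_one, one_ne_zero, if_false, if_true] at h10 h00
  rw [h1, map_add, hX, ← mul_one (C _), ← smul_eq_C_mul, map_smul, h00, zero_add,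
    smul_eq_mul] at h10
  rw [h1, (mul_eq_zero.1 h10).resolve_right (hpos 0).ne']
  simp

/-- The three-term recurrence without truncated subtraction. -/
theorem recurrence_succ (hrec : ∀ n, 1 ≤ n → X * P n = P (n + 1) + C (b n) * P (n - 1)) (n : ℕ) :
    P (n + 2) = X * P (n + 1) - C (b (n + 1)) * P n := by
  have := hrec (n + 1) (by omega)
  simp only [Nat.add_sub_cancel] at this
  rw [this]; ring

/-- Parity: `P n` has only coefficients of index congruent to `n` modulo `2`. -/
theorem coeff_eq_zero_of_odd (h0 : P 0 = 1) (h1 : P 1 = X)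
    (hrec : ∀ n, P (n + 2) = X * P (n + 1) - C (b (n + 1)) * P n) :
    ∀ n i, Odd (n + i) → (P n).coeff i = 0 := by
  intro n
  induction n using Nat.twoStepInduction with
  | zero =>
    intro i hi
    rw [h0, coeff_one, if_neg]
    rintro rfl
    simp at hi
  | one =>
    intro i hi
    rw [h1, coeff_X, if_neg]
    rintro rfl
    exact absurd hi (by decide)
  | more n ih1 ih2 =>
    intro i hi
    rw [hrec, coeff_sub, coeff_C_mul, ih1 i (by rw [Nat.odd_iff] at *; omega)]
    cases i with
    | zero => simp
    | succ i =>
      rw [coeff_X_mul, ih2 i (by rw [Nat.odd_iff] at *; omega)]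
      simp

end Orthogonality

section Ladder

/-- Monic orthogonal polynomials for a moment functional satisfying the Pearson equation
of the weight `(1 - x²)^α (1 - k x²)^β`, with recurrence coefficients `b` and
subleading coefficients `p1`. -/
structure PearsonSystem (α β k : ℝ) (l : ℝ[X] →ₗ[ℝ] ℝ) (P : ℕ → ℝ[X]) (h b p1 : ℕ → ℝ) :
    Prop where
  monic : ∀ n, (P n).Monic
  natDegree_eq : ∀ n, (P n).natDegree = n
  orth : ∀ m n, l (P m * P n) = if m = n then h n else 0
  pos : ∀ n, 0 < h n
  one_eq : P 1 = X
  recurrence : ∀ n, P (n + 2) = X * P (n + 1) - C (b (n + 1)) * P n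
  b_zero : b 0 = 0
  p1_zero : p1 0 = 0
  p1_one : p1 1 = 0
  p1_eq : ∀ n, p1 (n + 2) = (P (n + 2)).coeff n
  pearson : ∀ p, l (pearsonY k * derivative p + pearsonQ α β k * p) = 0

/-- The coefficient of `x` in `ladderL`. -/
noncomputable def ladderCoeff (α β k : ℝ) (b p1 : ℕ → ℝ) (n : ℕ) : ℝ :=
  -(n : ℝ) * (1 + k) + 2 * k * (α + β + n + 1 / 2) * b n - 2 * k * p1 n

/-- The coefficient `L_n` of `P_n` in the lowering relation. -/
noncomputable def ladderL (α β k : ℝ) (b p1 : ℕ → ℝ) (n : ℕ) : ℝ[X] :=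
  X * (C (n * k) * X ^ 2 + C (ladderCoeff α β k b p1 n))

/-- The coefficient `M_n` of `β_n P_{n-1}` in the lowering relation. -/
noncomputable def ladderM (α β k : ℝ) (b p1 : ℕ → ℝ) (n : ℕ) : ℝ[X] :=
  C (-2 * (α + β + n + 1 / 2) * k) * X ^ 2 - C (Caux α β k b p1 n)

/-- The polynomial `U_n` of the differential equation. -/
noncomputable def ladderU (α β k : ℝ) (b p1 : ℕ → ℝ) (n : ℕ) : ℝ[X] :=
  C (-k * n * (n + 2 * α + 2 * β + 3)) * X ^ 2
    + C (2 * k * (2 * n + 2 * α + 2 * β + 1) * (p1 n - b n)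
      + n * k * (n + 2 * β + 1) + n * (n + 2 * α + 1))

namespace PearsonSystem

variable {α β k : ℝ} {l : ℝ[X] →ₗ[ℝ] ℝ} {P : ℕ → ℝ[X]} {h b p1 : ℕ → ℝ}

theorem zero_eq (S : PearsonSystem α β k l P h b p1) : P 0 = 1 :=
  (S.monic 0).natDegree_eq_zero.1 (S.natDegree_eq 0)

theorem coeff_self (S : PearsonSystem α β k l P h b p1) (n : ℕ) : (P n).coeff n = 1 :=
  coeff_self_of_monic S.monic S.natDegree_eq n

theorem coeff_of_lt (S : PearsonSystem α β k l P h b p1) {n i : ℕ} (hi : n < i) :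
    (P n).coeff i = 0 :=
  coeff_of_natDegree_eq S.natDegree_eq hi

theorem coeff_of_odd (S : PearsonSystem α β k l P h b p1) {n i : ℕ} (hi : Odd (n + i)) :
    (P n).coeff i = 0 :=
  coeff_eq_zero_of_odd S.zero_eq S.one_eq S.recurrence n i hi

theorem p1_sub (S : PearsonSystem α β k l P h b p1) (n : ℕ) : p1 (n + 1) = p1 n - b n := by
  match n with
  | 0 => simp [S.p1_one, S.p1_zero, S.b_zero]
  | 1 => simp [S.p1_eq 0, S.recurrence, S.p1_one, S.zero_eq]
  | n + 2 =>
    rw [S.p1_eq (n + 1), S.p1_eq n, S.recurrence, coeff_sub, coeff_C_mul, coeff_X_mul,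
      S.coeff_self, mul_one]

theorem moment_of_lt (S : PearsonSystem α β k l P h b p1) {n j : ℕ} (hj : j < n) :
    l (P n * X ^ j) = 0 :=
  orthogonal_of_coeff_eq_zero S.monic S.natDegree_eq S.orth _ fun i hi => by
    rw [coeff_X_pow, if_neg (by omega)]

theorem moment_self (S : PearsonSystem α β k l P h b p1) (n : ℕ) :
    l (P n * X ^ n) = h n := by
  have key := orthogonal_of_coeff_eq_zero S.monic S.natDegree_eq S.orth (n := n)
    (X ^ n - P n) (by
      intro i hi
      rcases hi.eq_or_lt with rfl | hi
      · simp [S.coeff_self]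
      · simp [S.coeff_of_lt hi, coeff_X_pow, hi.ne'])
  rw [mul_sub, map_sub, S.orth, if_pos rfl] at key
  linarith

theorem moment_add_one (S : PearsonSystem α β k l P h b p1) (n : ℕ) :
    l (P n * X ^ (n + 1)) = 0 := by
  have key := orthogonal_of_coeff_eq_zero S.monic S.natDegree_eq S.orth (n := n)
    (X ^ (n + 1) - P (n + 1)) (by
      intro i hi
      rw [coeff_sub, coeff_X_pow]
      rcases hi.eq_or_lt with rfl | hi
      · simp [S.coeff_of_odd (n := n + 1) (i := n) ⟨n, by ring⟩]
      · rcases (Nat.succ_le_of_lt hi).eq_or_lt with rfl | hi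
        · simp [S.coeff_self]
        · rw [S.coeff_of_lt hi, if_neg (by omega), sub_zero])
  rw [mul_sub, map_sub, S.orth, if_neg (by omega)] at key
  linarith

theorem moment_add_two (S : PearsonSystem α β k l P h b p1) (n : ℕ) :
    l (P n * X ^ (n + 2)) = -p1 (n + 2) * h n := by
  have key := orthogonal_of_coeff_eq_zero S.monic S.natDegree_eq S.orth (n := n)
    (X ^ (n + 2) - P (n + 2) + p1 (n + 2) • P n) (by
      intro i hi
      rw [coeff_add, coeff_sub, coeff_smul, coeff_X_pow, smul_eq_mul]
      rcases hi.eq_or_lt with rfl | hi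
      · simp [S.p1_eq, S.coeff_self]
      rw [S.coeff_of_lt hi]
      rcases (Nat.succ_le_of_lt hi).eq_or_lt with rfl | hi
      · simp [S.coeff_of_odd (n := n + 2) (i := n + 1) ⟨n + 1, by ring⟩]
      rcases (Nat.succ_le_of_lt hi).eq_or_lt with rfl | hi
      · simp [S.coeff_self]
      · rw [S.coeff_of_lt (n := n + 2) (by omega), if_neg (by omega)]
        simp)
  rw [mul_add, mul_sub, map_add, map_sub, mul_smul_comm, map_smul, S.orth, S.orth,
    if_neg (by omega), if_pos rfl, smul_eq_mul] at key
  linarith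

theorem b_mul_h (S : PearsonSystem α β k l P h b p1) (n : ℕ) :
    b (n + 1) * h n = h (n + 1) := by
  have h1 := S.moment_self (n + 1)
  have h2 := S.moment_of_lt (n := n + 2) (j := n) (by omega)
  rw [S.recurrence, sub_mul, map_sub, mul_assoc (C _), ← smul_eq_C_mul, map_smul, S.moment_self,
    mul_comm X, mul_assoc, ← pow_succ', h1, smul_eq_mul] at h2
  linarith

/-- The second highest coefficient, in a form that covers all `n`. -/
theorem ite_coeff (S : PearsonSystem α β k l P h b p1) (n : ℕ) :
    (if 2 ≤ n then (P n).coeff (n - 2) else 0) = p1 n := by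
  match n with
  | 0 => simp [S.p1_zero]
  | 1 => simp [S.p1_one]
  | n + 2 => simp [S.p1_eq]

/-- The two sides of the lowering relation agree in degree at least `n`. -/
theorem lowering_coeff (S : PearsonSystem α β k l P h b p1) (m i : ℕ) (hi : m + 1 ≤ i) :
    (pearsonY k * derivative (P (m + 1)) - ladderL α β k b p1 (m + 1) * P (m + 1)
      - ladderM α β k b p1 (m + 1) * (C (b (m + 1)) * P m)).coeff i = 0 := by
  set θ : ℝ[X] := X * derivative (P (m + 1)) with hθ
  have hθc : ∀ j, θ.coeff j = j * (P (m + 1)).coeff j := by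
    intro j
    cases j with
    | zero => simp [hθ]
    | succ j => rw [hθ, coeff_X_mul, coeff_derivative]; push_cast; ring
  rw [← coeff_X_mul]
  have hX : X * (pearsonY k * derivative (P (m + 1)) - ladderL α β k b p1 (m + 1) * P (m + 1)
      - ladderM α β k b p1 (m + 1) * (C (b (m + 1)) * P m))
      = θ - C (1 + k) * (X ^ 2 * θ) + C k * (X ^ 4 * θ)
        - C ((m + 1 : ℕ) * k) * (X ^ 4 * P (m + 1))
        - C (ladderCoeff α β k b p1 (m + 1)) * (X ^ 2 * P (m + 1))
        - C (-2 * (α + β + (m + 1 : ℕ) + 1 / 2) * k * b (m + 1)) * (X ^ 3 * P m)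
        + C (Caux α β k b p1 (m + 1) * b (m + 1)) * (X ^ 1 * P m) := by
    rw [hθ, pearsonY, ladderL, ladderM, C_mul (a := -2 * (α + β + (m + 1 : ℕ) + 1 / 2) * k),
      C_mul (a := Caux α β k b p1 (m + 1)), C_add, C_1]
    ring
  rw [hX]
  simp only [coeff_add, coeff_sub, coeff_C_mul, coeff_X_pow_mul', hθc]
  obtain ⟨s, rfl⟩ := Nat.exists_eq_add_of_le hi
  match s with
  | 0 =>
    have h4 : (if 4 ≤ m + 1 + 0 + 1 then (P (m + 1)).coeff (m + 1 + 0 + 1 - 4) else 0) = 0 := by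
      split_ifs
      · exact S.coeff_of_odd (by rw [Nat.odd_iff]; omega)
      · rfl
    have h3 : (if 3 ≤ m + 1 + 0 + 1 then (P m).coeff (m + 1 + 0 + 1 - 3) else 0) = 0 := by
      split_ifs
      · exact S.coeff_of_odd (by rw [Nat.odd_iff]; omega)
      · rfl
    have h2 : (P (m + 1)).coeff (m + 1 + 0 + 1 - 2) = 0 :=
      S.coeff_of_odd (by rw [Nat.odd_iff]; omega)
    simp only [S.coeff_of_lt (n := m + 1) (i := m + 1 + 0 + 1) (by omega), h2, mul_zero,
      ← mul_ite_zero, h4, h3, ite_self,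
      S.coeff_of_lt (n := m) (i := m + 1 + 0 + 1 - 1) (by omega)]
    ring
  | 1 =>
    have h4 := S.ite_coeff (m + 1)
    have hif : 4 ≤ m + 1 + 1 + 1 ↔ 2 ≤ m + 1 := by omega
    have hsub : m + 1 + 1 + 1 - 4 = m + 1 - 2 := by omega
    have hθ4 : (if 2 ≤ m + 1 then ((m + 1 - 2 : ℕ) : ℝ) * (P (m + 1)).coeff (m + 1 - 2) else 0)
        = ((m : ℝ) - 1) * p1 (m + 1) := by
      rw [← h4]
      split_ifs with hm
      · rw [Nat.cast_sub hm]; push_cast; ring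
      · simp
    simp only [hif, hsub, hθ4, h4, S.coeff_of_lt (n := m + 1) (i := m + 1 + 1 + 1) (by omega),
      S.coeff_of_lt (n := m) (i := m + 1 + 1 + 1 - 1) (by omega),
      show m + 1 + 1 + 1 - 2 = m + 1 by omega, show m + 1 + 1 + 1 - 3 = m by omega, S.coeff_self,
      if_pos (show 2 ≤ m + 1 + 1 + 1 by omega), if_pos (show 3 ≤ m + 1 + 1 + 1 by omega),
      ladderCoeff, mul_zero, ite_self]
    push_cast
    ring
  | 2 =>
    simp only [S.coeff_of_lt (n := m + 1) (i := m + 1 + 2 + 1) (by omega),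
      S.coeff_of_lt (n := m + 1) (i := m + 1 + 2 + 1 - 2) (by omega),
      S.coeff_of_lt (n := m) (i := m + 1 + 2 + 1 - 3) (by omega),
      S.coeff_of_lt (n := m) (i := m + 1 + 2 + 1 - 1) (by omega),
      S.coeff_of_odd (n := m + 1) (i := m + 1 + 2 + 1 - 4) (by rw [Nat.odd_iff]; omega)]
    simp
  | 3 =>
    simp only [S.coeff_of_lt (n := m + 1) (i := m + 1 + 3 + 1) (by omega),
      S.coeff_of_lt (n := m + 1) (i := m + 1 + 3 + 1 - 2) (by omega),
      S.coeff_of_lt (n := m) (i := m + 1 + 3 + 1 - 3) (by omega),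
      S.coeff_of_lt (n := m) (i := m + 1 + 3 + 1 - 1) (by omega),
      show m + 1 + 3 + 1 - 4 = m + 1 by omega, S.coeff_self]
    simp
    ring
  | s + 4 =>
    simp only [S.coeff_of_lt (n := m + 1) (i := m + 1 + (s + 4) + 1) (by omega),
      S.coeff_of_lt (n := m + 1) (i := m + 1 + (s + 4) + 1 - 2) (by omega),
      S.coeff_of_lt (n := m + 1) (i := m + 1 + (s + 4) + 1 - 4) (by omega),
      S.coeff_of_lt (n := m) (i := m + 1 + (s + 4) + 1 - 3) (by omega),
      S.coeff_of_lt (n := m) (i := m + 1 + (s + 4) + 1 - 1) (by omega)]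
    simp

/-- The two sides of the lowering relation have equal moments of order less than `n`. -/
theorem lowering_moment (S : PearsonSystem α β k l P h b p1) (m j : ℕ) (hj : j < m + 1) :
    l ((pearsonY k * derivative (P (m + 1)) - ladderL α β k b p1 (m + 1) * P (m + 1)
      - ladderM α β k b p1 (m + 1) * (C (b (m + 1)) * P m)) * X ^ j) = 0 := by
  have hpear := S.pearson (P (m + 1) * X ^ j)
  have hE : (pearsonY k * derivative (P (m + 1)) - ladderL α β k b p1 (m + 1) * P (m + 1)
      - ladderM α β k b p1 (m + 1) * (C (b (m + 1)) * P m)) * X ^ j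
      = (pearsonY k * derivative (P (m + 1) * X ^ j) + pearsonQ α β k * (P (m + 1) * X ^ j))
        - (j : ℝ) • (P (m + 1) * X ^ (j - 1))
        + ((j : ℝ) * (1 + k) + 2 * (α + 1) + 2 * k * (β + 1) - ladderCoeff α β k b p1 (m + 1))
          • (P (m + 1) * X ^ (j + 1))
        - (j * k + 2 * k * (α + β + 2) + (m + 1 : ℕ) * k) • (P (m + 1) * X ^ (j + 3))
        + (2 * (α + β + (m + 1 : ℕ) + 1 / 2) * k * b (m + 1)) • (P m * X ^ (j + 2))
        + (Caux α β k b p1 (m + 1) * b (m + 1)) • (P m * X ^ j) := by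
    refine Polynomial.funext fun x => ?_
    cases j with
    | zero =>
      simp [pearsonY, pearsonQ, ladderL, ladderM]
      ring
    | succ j =>
      simp [pearsonY, pearsonQ, ladderL, ladderM]
      ring
  rw [hE]
  simp only [map_add, map_sub, map_smul, hpear, smul_eq_mul]
  rw [S.moment_of_lt (n := m + 1) (j := j - 1) (by omega)]
  have hbh := S.b_mul_h m
  obtain hj | hj | hj | hj : j = m ∨ j + 1 = m ∨ j + 2 = m ∨ j + 2 < m := by omega
  · subst hj
    rw [S.moment_self, S.moment_self, S.moment_add_two, show j + 3 = j + 1 + 2 by ring,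
      S.moment_add_two]
    have e1 := S.p1_sub (j + 1)
    have e2 := S.p1_sub (j + 2)
    rw [show j + 2 + 1 = j + 1 + 2 by ring] at e2
    rw [show j + 1 + 1 = j + 2 by ring] at e1
    rw [e2, e1, ← hbh, Caux, ladderCoeff]
    push_cast
    ring
  · subst hj
    rw [S.moment_of_lt (n := j + 1 + 1) (j := j + 1) (by omega),
      S.moment_of_lt (n := j + 1) (j := j) (by omega),
      show j + 3 = j + 1 + 1 + 1 by ring, S.moment_add_one,
      show j + 2 = j + 1 + 1 by ring, S.moment_add_one]
    ring
  · subst hj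
    rw [S.moment_of_lt (n := j + 2 + 1) (j := j + 1) (by omega),
      S.moment_of_lt (n := j + 2) (j := j) (by omega),
      show j + 3 = j + 2 + 1 by ring, S.moment_self, S.moment_self, ← hbh]
    push_cast
    ring
  · rw [S.moment_of_lt (n := m + 1) (j := j + 1) (by omega),
      S.moment_of_lt (n := m + 1) (j := j + 3) (by omega),
      S.moment_of_lt (n := m) (j := j) (by omega),
      S.moment_of_lt (n := m) (j := j + 2) (by omega)]
    ring

/-- The lowering relation `Y P_n' = L_n P_n + β_n M_n P_{n-1}`. -/
theorem lowering (S : PearsonSystem α β k l P h b p1) (m : ℕ) :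
    pearsonY k * derivative (P (m + 1)) = ladderL α β k b p1 (m + 1) * P (m + 1)
      + ladderM α β k b p1 (m + 1) * (C (b (m + 1)) * P m) := by
  have := eq_zero_of_moments S.monic S.natDegree_eq S.orth S.pos _ (S.lowering_coeff m)
    (S.lowering_moment m)
  linear_combination this

/-- The lowering relation with `β_n P_{n-1}` eliminated, valid for all `n`. -/
theorem lowering_next (S : PearsonSystem α β k l P h b p1) (n : ℕ) :
    pearsonY k * derivative (P n) = ladderL α β k b p1 n * P n
      + ladderM α β k b p1 n * (X * P n - P (n + 1)) := by
  cases n with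
  | zero => simp [S.zero_eq, S.one_eq, ladderL, ladderCoeff, S.b_zero, S.p1_zero]
  | succ n => rw [S.recurrence, S.lowering]; ring

/-- First compatibility condition. -/
theorem ladderL_add (S : PearsonSystem α β k l P h b p1) (n : ℕ) :
    ladderL α β k b p1 (n + 1) + ladderL α β k b p1 n + pearsonQ α β k
      - derivative (pearsonY k) + X * ladderM α β k b p1 n = 0 := by
  refine Polynomial.funext fun x => ?_
  simp [pearsonY, pearsonQ, ladderL, ladderM, ladderCoeff, Caux, S.p1_sub n]
  ring

/-- Second compatibility condition. -/
theorem ladderM_sub (S : PearsonSystem α β k l P h b p1) (n : ℕ) :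
    pearsonY k + X * (ladderL α β k b p1 (n + 1) - ladderL α β k b p1 (n + 2))
      = C (b (n + 2)) * ladderM α β k b p1 (n + 2) - C (b (n + 1)) * ladderM α β k b p1 n := by
  have hrec := congrArg derivative (S.recurrence n)
  simp only [derivative_sub, derivative_mul, derivative_X, derivative_C] at hrec
  have h0 := S.lowering_next n
  have h1 := S.lowering n
  have h2 := S.lowering (n + 1)
  have hr := S.recurrence n
  have hc := S.ladderL_add (n + 1)
  have hc0 := S.ladderL_add n
  have hP : P (n + 1) ≠ 0 := (S.monic _).ne_zero
  refine mul_right_cancel₀ hP ?_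
  simp only [show n + 1 + 1 = n + 2 by ring] at *
  linear_combination h2 - pearsonY k * hrec - X * h1 + C (b (n + 1)) * h0
    - C (b (n + 1)) * P n * (hc - hc0) + ladderL α β k b p1 (n + 2) * hr

/-- The quadratic identity for the ladder coefficients. -/
theorem quadratic (S : PearsonSystem α β k l P h b p1) (n : ℕ) :
    pearsonY k * derivative (ladderL α β k b p1 (n + 1))
      + ladderL α β k b p1 (n + 1) * (ladderL α β k b p1 (n + 1) + pearsonQ α β k
        - derivative (pearsonY k))
      - C (b (n + 1)) * ladderM α β k b p1 (n + 1) * ladderM α β k b p1 n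
      = -(pearsonY k * ladderU α β k b p1 (n + 1)) := by
  have hU : ∀ n, ladderU α β k b p1 (n + 1) = ladderU α β k b p1 n
      + derivative (ladderL α β k b p1 n) - derivative (ladderL α β k b p1 (n + 1))
      + ladderM α β k b p1 n := by
    intro n
    refine Polynomial.funext fun x => ?_
    simp [ladderU, ladderL, ladderM, ladderCoeff, Caux, S.p1_sub n]
    ring
  induction n with
  | zero =>
    have hL0 : ladderL α β k b p1 0 = 0 := by simp [ladderL, ladderCoeff, S.b_zero, S.p1_zero]
    have hU0 : ladderU α β k b p1 0 = 0 := by simp [ladderU, S.b_zero, S.p1_zero]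
    have h1 := S.ladderL_add 0
    have h2 := S.lowering 0
    simp only [zero_add, S.one_eq, S.zero_eq, derivative_X, hL0, add_zero] at h1 h2 ⊢
    have hU1 := hU 0
    rw [hL0, hU0, zero_add] at hU1
    rw [hU1, derivative_zero]
    linear_combination ladderL α β k b p1 1 * h1 + ladderM α β k b p1 0 * h2
  | succ n ih =>
    have h1 := S.ladderL_add (n + 1)
    have h2 := S.ladderM_sub n
    simp only [show n + 1 + 1 = n + 2 by ring] at *
    rw [hU (n + 1)]
    linear_combination ih + (ladderL α β k b p1 (n + 2) - ladderL α β k b p1 (n + 1)) * h1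
      + ladderM α β k b p1 (n + 1) * h2

/-- The second-order differential equation satisfied by the orthogonal polynomials. -/
theorem ode (S : PearsonSystem α β k l P h b p1) (n : ℕ) :
    pearsonY k * ladderM α β k b p1 (n + 1) * derivative (derivative (P (n + 1)))
      + (pearsonQ α β k * ladderM α β k b p1 (n + 1)
        - pearsonY k * derivative (ladderM α β k b p1 (n + 1))) * derivative (P (n + 1))
      + (ladderL α β k b p1 (n + 1) * derivative (ladderM α β k b p1 (n + 1))
        + ladderM α β k b p1 (n + 1) * ladderU α β k b p1 (n + 1)) * P (n + 1) = 0 := by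
  have hY : pearsonY k ≠ 0 := by
    intro h0
    have := congrArg (eval 0) h0
    simp [pearsonY] at this
  refine (mul_eq_zero.1 ?_).resolve_left hY
  have h0 := S.lowering_next n
  have h1 := S.lowering n
  have hd := congrArg derivative h1
  simp only [derivative_add, derivative_mul, derivative_C] at hd
  have hc := S.ladderL_add n
  have hq := S.quadratic n
  linear_combination pearsonY k * ladderM α β k b p1 (n + 1) * hd
    - pearsonY k * derivative (ladderM α β k b p1 (n + 1)) * h1
    + ladderM α β k b p1 (n + 1) ^ 2 * C (b (n + 1)) * h0
    + ladderM α β k b p1 (n + 1) ^ 2 * C (b (n + 1)) * P n * hc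
    + ladderM α β k b p1 (n + 1) * (ladderL α β k b p1 (n + 1) + pearsonQ α β k
      - derivative (pearsonY k)) * h1
    + ladderM α β k b p1 (n + 1) * P (n + 1) * hq

end PearsonSystem

end Ladder

/-- The orthogonal polynomials of `(1 - x²)^α (1 - k x²)^β` form a Pearson system. -/
theorem pearsonSystem_of_weight {α β k : ℝ} (hα : -1 < α) (hk : k ∈ Set.Ioo (0 : ℝ) 1)
    {w : ℝ → ℝ} (hw : ∀ x : ℝ, w x = (1 - x ^ 2) ^ α * (1 - k * x ^ 2) ^ β)
    (hint : IntervalIntegrable w volume (-1) 1)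
    {P : ℕ → ℝ[X]} (hm : ∀ n, (P n).Monic) (hd : ∀ n, (P n).natDegree = n)
    {h : ℕ → ℝ} (hpos : ∀ n, 0 < h n)
    (ho : ∀ m n : ℕ, (∫ x in (-1 : ℝ)..1, (P m).eval x * (P n).eval x * w x)
      = if m = n then h n else 0)
    {b : ℕ → ℝ} (hb0 : b 0 = 0)
    (hrec : ∀ n : ℕ, 1 ≤ n → X * P n = P (n + 1) + C (b n) * P (n - 1))
    {p1 : ℕ → ℝ} (hp10 : p1 0 = 0) (hp11 : p1 1 = 0)
    (hp1 : ∀ n : ℕ, 2 ≤ n → p1 n = (P n).coeff (n - 2)) :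
    PearsonSystem α β k (momentFunctional w hint) P h b p1 := by
  have ho' : ∀ m n, momentFunctional w hint (P m * P n) = if m = n then h n else 0 := by
    intro m n
    rw [← ho m n]
    simp [momentFunctional]
  have hX : momentFunctional w hint X = 0 := by
    have := integral_id_mul_even (w := w) fun x => by simp [hw]
    simpa [momentFunctional] using this
  exact
    { monic := hm
      natDegree_eq := hd
      orth := ho'
      pos := hpos
      one_eq := eq_X_of_first_moment hm hd ho' hpos hX
      recurrence := recurrence_succ hrec
      b_zero := hb0
      p1_zero := hp10
      p1_one := hp11
      p1_eq := fun n => hp1 (n + 2) (by omega)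
      pearson := integral_pearson hα hk hw hint }

end SemiclassicalJacobi

/-- The monic orthogonal polynomials `P_n` satisfy (in denominator
cleared form) the second order linear ODE
`Y M_n P_n'' − [2x((α+1)(1−k²x²)+k²(β+1)(1−x²))M_n + Y M_n']P_n' + [L_n M_n' + M_n U_n]P_n = 0`. -/
theorem stmt_4
    (α β k2 : ℝ) (hα : -1 < α) (hk2 : k2 ∈ Set.Ioo (0:ℝ) 1)
    (w : ℝ → ℝ)
    (hw : ∀ x : ℝ, w x = (1 - x ^ 2) ^ α * (1 - k2 * x ^ 2) ^ β)
    (P : ℕ → Polynomial ℝ)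
    (hPmonic : ∀ n, (P n).Monic)
    (hPdeg : ∀ n, (P n).natDegree = n)
    (h : ℕ → ℝ) (hpos : ∀ n, 0 < h n)
    (horth : ∀ m n : ℕ,
      (∫ x in (-1:ℝ)..1, (P m).eval x * (P n).eval x * w x)
        = if m = n then h n else 0)
    (b : ℕ → ℝ) (hb0 : b 0 = 0)
    (hrec : ∀ n : ℕ, 1 ≤ n →
      Polynomial.X * P n = P (n + 1) + Polynomial.C (b n) * P (n - 1))
    (p1 : ℕ → ℝ) (hp10 : p1 0 = 0) (hp11 : p1 1 = 0)
    (hp1 : ∀ n : ℕ, 2 ≤ n → p1 n = (P n).coeff (n - 2)) :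
    ∀ n : ℕ, 1 ≤ n → ∀ x : ℝ,
      ((1 - x ^ 2) * (1 - k2 * x ^ 2))
          * (-2 * (α + β + (n:ℝ) + 1/2) * k2 * x ^ 2 - Caux α β k2 b p1 n)
          * (((P n).derivative.derivative).eval x)
        - (2 * x * ((α + 1) * (1 - k2 * x ^ 2) + k2 * (β + 1) * (1 - x ^ 2))
              * (-2 * (α + β + (n:ℝ) + 1/2) * k2 * x ^ 2 - Caux α β k2 b p1 n)
            + ((1 - x ^ 2) * (1 - k2 * x ^ 2))
              * (-4 * (α + β + (n:ℝ) + 1/2) * k2 * x))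
          * ((P n).derivative.eval x)
        + ((x * ((n:ℝ) * k2 * x ^ 2 - (n:ℝ) * (1 + k2)
                + 2 * k2 * (α + β + (n:ℝ) + 1/2) * b n - 2 * k2 * p1 n))
              * (-4 * (α + β + (n:ℝ) + 1/2) * k2 * x)
            + (-2 * (α + β + (n:ℝ) + 1/2) * k2 * x ^ 2 - Caux α β k2 b p1 n)
              * (-k2 * x ^ 2 * (n:ℝ) * ((n:ℝ) + 2 * α + 2 * β + 3)
                + 2 * k2 * (2 * (n:ℝ) + 2 * α + 2 * β + 1) * (p1 n - b n)
                + (n:ℝ) * k2 * ((n:ℝ) + 2 * β + 1)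
                + (n:ℝ) * ((n:ℝ) + 2 * α + 1)))
          * ((P n).eval x)
        = 0 := by
  intro n hn x
  have hP0 : P 0 = 1 := (hPmonic 0).natDegree_eq_zero.1 (hPdeg 0)
  have hint : IntervalIntegrable w volume (-1) 1 := by
    by_contra hni
    have h00 := horth 0 0
    simp only [hP0, Polynomial.eval_one, one_mul, if_true,
      intervalIntegral.integral_undef hni] at h00
    exact (hpos 0).ne h00
  obtain ⟨n, rfl⟩ := Nat.exists_eq_add_of_le' hn
  have key := congrArg (Polynomial.eval x) ((pearsonSystem_of_weight hα hk2 hw hint hPmonic hPdeg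
    hpos horth hb0 hrec hp10 hp11 hp1).ode n)
  simp only [pearsonY, pearsonQ, ladderL, ladderM, ladderU, ladderCoeff, Polynomial.derivative_sub,
    Polynomial.derivative_mul, Polynomial.derivative_C, Polynomial.derivative_X_pow,
    Polynomial.eval_add, Polynomial.eval_sub, Polynomial.eval_mul, Polynomial.eval_neg,
    Polynomial.eval_pow, Polynomial.eval_X, Polynomial.eval_C, Polynomial.eval_one,
    Polynomial.eval_zero, Polynomial.eval_ofNat] at key
  push_cast at key ⊢
  linear_combination key
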